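/- For every y ∈ W_{H*}, one has b⁻¹ y* b = w_{H*} y w_{H*}. In particular the map ε : y ↦ b⁻¹ y* b maps W_{H*} to itself and coincides with conjugation by the longest element w_{H*}. -/

import Mathlib

set_option synthInstance.maxHeartbeats 1000000
set_option maxHeartbeats 2000000

open scoped Classical

noncomputable section

namespace LY

/-! ## The coefficient field `ℚ(q)` -/

/-- The field `ℚ(q)` of rational functions. -/
abbrev K : Type := RatFunc ℚ

/-- The indeterminate `q`. -/
def qK : K := RatFunc.X

/-- The inclusion `ℤ[q] → ℚ(q)`. -/
def toK (p : Polynomial ℤ) : K := algebraMap (Polynomial ℚ) K (p.map (Int.castRingHom ℚ))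

/-- Evaluation of `p ∈ ℤ[q]` at `−q`, as an element of `ℚ(q)`; i.e. `p(−q)`. -/
def atNegQ (p : Polynomial ℤ) : K := Polynomial.eval₂ (Int.castRingHom K) (-qK) p

/-- The standard basis element `T_w` (resp. `a_w`) of the function model `W → ℚ(q)`
of the Hecke algebra (resp. of the Lusztig–Vogan module `M`). -/
def TT {W : Type} (w : W) : W → K := fun y => if y = w then 1 else 0

variable {B W : Type} [Group W] {M : CoxeterMatrix B}

/-- The Bruhat order on a Coxeter group: `u ≤ v` iff `v` is obtained from `u` by successive
right multiplications by reflections, each increasing the length. -/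
def BruhatLE (cs : CoxeterSystem M W) (u v : W) : Prop :=
  Relation.ReflTransGen
    (fun a b => cs.length a < cs.length b ∧ ∃ t, cs.IsReflection t ∧ b = a * t) u v

/-- Connectedness of the Coxeter diagram of `M`. -/
def DiagramConnected (M : CoxeterMatrix B) : Prop :=
  ∀ i j : B, Relation.ReflTransGen (fun a b => a ≠ b ∧ M a b ≠ 2) i j

/-- An automorphism of `W` preserving the set `S` of simple reflections, i.e. an element
of `A = Aut(W,S)`. -/
def IsDiagAut (cs : CoxeterSystem M W) (a : MulAut W) : Prop :=
  (⇑a) '' (Set.range cs.simple) = Set.range cs.simple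

/-! ## The affine setting -/

/-- All the data and axioms describing the setting: `(W,S)` is the Coxeter group of an
untwisted connected affine Dynkin diagram (an irreducible affine Weyl group); `Λ` is the
subgroup of translations (elements with finite conjugacy class), free abelian of finite
rank and of finite index; `s₀` is a hyperspecial vertex, `J = S − {s₀}`, `W_J` is the
finite subgroup generated by `J` with longest element `w_J`; `*` is the involution of `W`
given by `w* = w_J w w_J` on `W_J` and `λ* = −(ʷᴶλ)` on `Λ`; `pr` is the projection
`W → W_J` along `Λ`; `ρ` is the conjugation action of `W` on `Λ_ℚ ≅ ℚ^rank`
(via the identification `freeIso` of `Λ` with `ℤ^rank`). -/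
structure AffineData (cs : CoxeterSystem M W) where
  finB : Finite B
  conn : DiagramConnected M
  infW : Infinite W
  /-- the subgroup `Λ` of translations -/
  Lam : Subgroup W
  hLam_mem : ∀ w : W, w ∈ Lam ↔ {x : W | IsConj w x}.Finite
  hLam_normal : Lam.Normal
  hLam_comm : ∀ a ∈ Lam, ∀ b ∈ Lam, a * b = b * a
  hLam_index : Lam.FiniteIndex
  /-- `Λ` is free abelian of finite rank -/
  rank : ℕ
  freeIso : Lam ≃* Multiplicative (Fin rank → ℤ)
  /-- the hyperspecial vertex `s₀` -/
  s0 : W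
  hs0_S : s0 ∈ Set.range cs.simple
  /-- `s₀` is hyperspecial: the projection `W → W/Λ` restricts to an isomorphism from the
  subgroup generated by `S − {s₀}` onto `W/Λ`. -/
  hs0_hyper : ∀ w : W, ∃! u : W,
    u ∈ Subgroup.closure (Set.range cs.simple \ {s0}) ∧ w * u⁻¹ ∈ Lam
  hWJ_fin : (Subgroup.closure (Set.range cs.simple \ {s0}) : Set W).Finite
  /-- the longest element `w_J` of `W_J` -/
  wJ : W
  hwJ_mem : wJ ∈ Subgroup.closure (Set.range cs.simple \ {s0})
  hwJ_max : ∀ u ∈ Subgroup.closure (Set.range cs.simple \ {s0}), cs.length u ≤ cs.length wJ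
  /-- the involution `*` of `W` -/
  st : MulAut W
  hst_inv : ∀ w : W, st (st w) = w
  hst_J : ∀ u ∈ Subgroup.closure (Set.range cs.simple \ {s0}), st u = wJ * u * wJ
  hst_Lam : ∀ l ∈ Lam, st l = (wJ * l * wJ⁻¹)⁻¹
  hst_S : ∀ s ∈ Set.range cs.simple, st s ∈ Set.range cs.simple
  /-- lower Bruhat intervals are finite -/
  hBruhat_fin : ∀ w : W, {y : W | BruhatLE cs y w}.Finite
  /-- the projection `W → W_J` along `Λ` (`w ↦ w̄`) -/
  pr : W → W
  hpr : ∀ w : W, pr w ∈ Subgroup.closure (Set.range cs.simple \ {s0}) ∧ w * (pr w)⁻¹ ∈ Lam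
  /-- the conjugation action of `W` on `Λ_ℚ ≅ ℚ^rank` -/
  rho : W → ((Fin rank → ℚ) →ₗ[ℚ] (Fin rank → ℚ))
  hrho : ∀ (w : W) (l : Lam),
    rho w (fun i => ((Multiplicative.toAdd (freeIso l)) i : ℚ)) =
      fun i => ((Multiplicative.toAdd
        (freeIso ⟨w * (l : W) * w⁻¹, hLam_normal.conj_mem _ l.2 w⟩)) i : ℚ)

namespace AffineData

variable {cs : CoxeterSystem M W} (D : AffineData cs)

/-- The set `J = S − {s₀}`. -/
def Jset : Set W := Set.range cs.simple \ {D.s0}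

/-- The finite Weyl group `W_J`. -/
def WJ : Subgroup W := Subgroup.closure D.Jset

/-- `λ ∈ Λ` is a dominant translation (`λ ∈ Λ⁺`). -/
def IsDominant (l : W) : Prop :=
  l ∈ D.Lam ∧ cs.length (l * D.wJ) = cs.length l + cs.length D.wJ

/-- The embedding `Λ → Λ_ℚ = ℚ^rank`. -/
def iota (l : D.Lam) : Fin D.rank → ℚ :=
  fun i => ((Multiplicative.toAdd (D.freeIso l)) i : ℚ)

/-- `e(A)`: the dimension of the `(−1)`-eigenspace of a linear endomorphism `A` of `Λ_ℚ`. -/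
def eNeg (f : (Fin D.rank → ℚ) →ₗ[ℚ] (Fin D.rank → ℚ)) : ℕ :=
  Module.finrank ℚ (Module.End.eigenspace (f : Module.End ℚ (Fin D.rank → ℚ)) (-1))

/-- The map `A_u : λ ↦ ᵘ(λ*) = −(ᵘʷᴶλ)` on `Λ_ℚ`, for `u ∈ W_J`. -/
def Amap (u : W) : (Fin D.rank → ℚ) →ₗ[ℚ] (Fin D.rank → ℚ) := - D.rho (u * D.wJ)

/-- The invariant `φ(w) = e(A_{w̄}) − e(A_e)` for `w ∈ I_*`. -/
def phi (w : W) : ℤ := (D.eNeg (D.Amap (D.pr w)) : ℤ) - (D.eNeg (D.Amap 1) : ℤ)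

/-- The double coset `W_J x W_J`. -/
def DCoset (x : W) : Set W := {y : W | ∃ u ∈ D.WJ, ∃ v ∈ D.WJ, y = u * x * v}

/-- The set `H = J ∩ bJb⁻¹`. -/
def Hset (b : W) : Set W := D.Jset ∩ ((fun s => b * s * b⁻¹) '' D.Jset)

/-- The set `H* ⊆ J`, image of `H` under `*`. -/
def Hstar (b : W) : Set W := (⇑D.st) '' D.Hset b

/-- The subgroup `W_{H*}` generated by `H*`. -/
def WHstar (b : W) : Subgroup W := Subgroup.closure (D.Hstar b)

/-- The reflection representation `R'` of `W_{H*}`, as a subspace of `Λ_ℚ`: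
the span of the vectors `λ − ˢλ` for `λ ∈ Λ`, `s ∈ H*`. -/
def Rprime (b : W) : Submodule ℚ (Fin D.rank → ℚ) :=
  Submodule.span ℚ
    {v : Fin D.rank → ℚ | ∃ l : D.Lam, ∃ s ∈ D.Hstar b,
      v = D.iota l - D.iota ⟨s * (l : W) * s⁻¹, D.hLam_normal.conj_mem _ l.2 s⟩}

/-- `e'(A)`: the dimension of the `(−1)`-eigenspace of an endomorphism `A` of `R'`. -/
def eNeg' {b : W} (f : ↥(D.Rprime b) →ₗ[ℚ] ↥(D.Rprime b)) : ℕ :=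
  Module.finrank ℚ (Module.End.eigenspace (f : Module.End ℚ ↥(D.Rprime b)) (-1))

/-- `φ'(z) = e'(B_z) − e'(B_e)`, where `B_u : x ↦ −u·(w_{H*}·x)` on `R'`; here
`rho'` is the conjugation action of `W_{H*}` on `R'` and `wHs` is the longest element
of `W_{H*}`. -/
def phiP {b : W} (rho' : W → (↥(D.Rprime b) →ₗ[ℚ] ↥(D.Rprime b))) (wHs z : W) : ℤ :=
  (D.eNeg' (-(rho' (z * wHs))) : ℤ) - (D.eNeg' (-(rho' wHs)) : ℤ)

/-- Membership in `A_Λ ⊆ A = Aut(W,S)`: automorphisms acting on `Λ` as conjugation by some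
element of `W_J`. -/
def InALam (a : MulAut W) : Prop :=
  IsDiagAut cs a ∧ ∃ w ∈ D.WJ, ∀ l ∈ D.Lam, a l = w * l * w⁻¹

/-- Membership in the coset `A_Λ* = {a ∘ * : a ∈ A_Λ}`. -/
def InALamStar (c : MulAut W) : Prop := ∃ a : MulAut W, D.InALam a ∧ c = a * D.st

/-- The double coset `W_J x W_J^◇`, where `W_J^◇` is the subgroup generated by
`J^◇ = S − {s₁}`. -/
def DCosetDia (s1 : W) (x : W) : Set W :=
  {y : W | ∃ u ∈ D.WJ, ∃ v ∈ Subgroup.closure (Set.range cs.simple \ {s1}), y = u * x * v}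


end AffineData

/-! ## The Hecke algebra, the Lusztig–Vogan module, and the polynomials `P`, `P^σ` -/

/-- The Hecke algebra of `(W,S)` over `ℚ(q)` (modelled on functions `W → ℚ(q)`, with basis
`TT w = T_w`), together with its bar involution, and the Kazhdan–Lusztig polynomials
`P_{y,w} ∈ ℤ[q]` characterized by their defining properties. -/
structure HeckeData (cs : CoxeterSystem M W) where
  /-- the involution `q ↦ q⁻¹` of `ℚ(q)` -/
  barK : K →+* K
  hbarK_X : barK qK = qK⁻¹
  hbarK_inv : ∀ x, barK (barK x) = x
  /-- the multiplication of the Hecke algebra -/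
  mulH : (W → K) →ₗ[K] (W → K) →ₗ[K] (W → K)
  hmul_assoc : ∀ x y z : W → K, mulH (mulH x y) z = mulH x (mulH y z)
  hmul_one : ∀ x : W → K, mulH (TT 1) x = x ∧ mulH x (TT 1) = x
  hmul_TT : ∀ u v : W, cs.length (u * v) = cs.length u + cs.length v →
    mulH (TT u) (TT v) = TT (u * v)
  hmul_Ts : ∀ s ∈ Set.range cs.simple,
    mulH (TT s) (TT s) = (qK - 1) • TT s + qK • TT (1 : W)
  /-- the bar involution of the Hecke algebra: the ring involution with `q ↦ q⁻¹`,
  `T_w ↦ (T_{w⁻¹})⁻¹` -/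
  barH : (W → K) →+ (W → K)
  hbarH_inv : ∀ x, barH (barH x) = x
  hbarH_smul : ∀ (c : K) (x : W → K), barH (c • x) = barK c • barH x
  hbarH_mul : ∀ x y : W → K, barH (mulH x y) = mulH (barH x) (barH y)
  hbarH_T : ∀ w : W, mulH (barH (TT w)) (TT w⁻¹) = TT (1 : W) ∧
    mulH (TT w⁻¹) (barH (TT w)) = TT (1 : W)
  /-- the Kazhdan–Lusztig polynomials `P_{y,w}` -/
  P : W → W → Polynomial ℤ
  hP_supp : ∀ y w : W, ¬ BruhatLE cs y w → P y w = 0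
  hP_diag : ∀ w : W, P w w = 1
  hP_deg : ∀ y w : W, BruhatLE cs y w → y ≠ w →
    2 * (P y w).natDegree + 1 ≤ cs.length w - cs.length y
  hP_dual : ∀ w : W,
    (qK ^ cs.length w) • barH (fun y => if BruhatLE cs y w then toK (P y w) else 0)
      = fun y => if BruhatLE cs y w then toK (P y w) else 0

/-- The Lusztig–Vogan module `M` over the Hecke algebra `H'` with parameter `q²`, attached to
a length-preserving involutive automorphism `star` of `(W,S)`, together with its bar
involution, and the polynomials `P^σ_{y,w} ∈ ℤ[q]` (for `y, w ∈ I_*`) characterized by their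
defining properties.  Both `H'` and `M` are modelled on functions `W → ℚ(q)`; the basis
element `a_w` of `M` (for `w ∈ I_*`) is `TT w`. -/
structure LVData (cs : CoxeterSystem M W) (star : MulAut W) where
  /-- the involution `q ↦ q⁻¹` of `ℚ(q)` -/
  barK : K →+* K
  hbarK_X : barK qK = qK⁻¹
  hbarK_inv : ∀ x, barK (barK x) = x
  /-- the multiplication of the Hecke algebra `H'` with parameter `q²` -/
  mulH' : (W → K) →ₗ[K] (W → K) →ₗ[K] (W → K)
  hmul'_assoc : ∀ x y z : W → K, mulH' (mulH' x y) z = mulH' x (mulH' y z)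
  hmul'_one : ∀ x : W → K, mulH' (TT 1) x = x ∧ mulH' x (TT 1) = x
  hmul'_TT : ∀ u v : W, cs.length (u * v) = cs.length u + cs.length v →
    mulH' (TT u) (TT v) = TT (u * v)
  hmul'_Ts : ∀ s ∈ Set.range cs.simple,
    mulH' (TT s) (TT s) = (qK ^ 2 - 1) • TT s + (qK ^ 2) • TT (1 : W)
  /-- the bar involution of `H'` -/
  barH' : (W → K) →+ (W → K)
  hbarH'_inv : ∀ x, barH' (barH' x) = x
  hbarH'_smul : ∀ (c : K) (x : W → K), barH' (c • x) = barK c • barH' x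
  hbarH'_mul : ∀ x y : W → K, barH' (mulH' x y) = mulH' (barH' x) (barH' y)
  hbarH'_T : ∀ w : W, mulH' (barH' (TT w)) (TT w⁻¹) = TT (1 : W) ∧
    mulH' (TT w⁻¹) (barH' (TT w)) = TT (1 : W)
  /-- the action of `H'` on the module `M` -/
  actM : (W → K) →ₗ[K] (W → K) →ₗ[K] (W → K)
  hact_one : ∀ m : W → K, actM (TT 1) m = m
  hact_mul : ∀ (h h' : W → K) (m : W → K), actM (mulH' h h') m = actM h (actM h' m)
  hact1 : ∀ s ∈ Set.range cs.simple, ∀ w : W, star w = w⁻¹ →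
    s * w = w * star s → cs.length w < cs.length (s * w) →
    actM (TT s) (TT w) = qK • TT w + (qK + 1) • TT (s * w)
  hact2 : ∀ s ∈ Set.range cs.simple, ∀ w : W, star w = w⁻¹ →
    s * w = w * star s → cs.length (s * w) < cs.length w →
    actM (TT s) (TT w) = (qK ^ 2 - qK - 1) • TT w + (qK ^ 2 - qK) • TT (s * w)
  hact3 : ∀ s ∈ Set.range cs.simple, ∀ w : W, star w = w⁻¹ →
    s * w ≠ w * star s → cs.length w < cs.length (s * w) →
    actM (TT s) (TT w) = TT (s * w * star s)
  hact4 : ∀ s ∈ Set.range cs.simple, ∀ w : W, star w = w⁻¹ →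
    s * w ≠ w * star s → cs.length (s * w) < cs.length w →
    actM (TT s) (TT w) = (qK ^ 2 - 1) • TT w + (qK ^ 2) • TT (s * w * star s)
  /-- the bar involution of the module `M` -/
  barM : (W → K) →+ (W → K)
  hbarM_inv : ∀ m : W → K, barM (barM m) = m
  hbarM_smul : ∀ (c : K) (m : W → K), barM (c • m) = barK c • barM m
  hbarM_act : ∀ (h m : W → K), barM (actM h m) = actM (barH' h) (barM m)
  hbarM_one : barM (TT 1) = TT (1 : W)
  /-- the Lusztig–Vogan polynomials `P^σ_{y,w}` -/
  Psig : W → W → Polynomial ℤ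
  hPsig_supp : ∀ y w : W, ¬ (BruhatLE cs y w ∧ star y = y⁻¹) → Psig y w = 0
  hPsig_diag : ∀ w : W, star w = w⁻¹ → Psig w w = 1
  hPsig_deg : ∀ y w : W, star w = w⁻¹ → star y = y⁻¹ → BruhatLE cs y w → y ≠ w →
    2 * (Psig y w).natDegree + 1 ≤ cs.length w - cs.length y
  hPsig_dual : ∀ w : W, star w = w⁻¹ →
    (qK ^ (2 * cs.length w)) •
        barM (fun y => if BruhatLE cs y w ∧ star y = y⁻¹ then toK (Psig y w) else 0)
      = fun y => if BruhatLE cs y w ∧ star y = y⁻¹ then toK (Psig y w) else 0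

/-! ## The `Z`-polynomials -/

/-- `Z_w(q) = Σ_{y ≤ w} P_{y,w}(q) q^{ℓ(y)}`. -/
def Zpoly (cs : CoxeterSystem M W) (HD : HeckeData cs) (w : W) : K :=
  ∑ᶠ y : W, if BruhatLE cs y w then toK (HD.P y w) * qK ^ cs.length y else 0

/-- `Z_w(−q) = Σ_{y ≤ w} P_{y,w}(−q) (−q)^{ℓ(y)}`. -/
def ZpolyNeg (cs : CoxeterSystem M W) (HD : HeckeData cs) (w : W) : K :=
  ∑ᶠ y : W, if BruhatLE cs y w then atNegQ (HD.P y w) * (-qK) ^ cs.length y else 0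

/-- `Z^σ_w(q) = Σ_{y ≤ w, y ∈ I_*} P^σ_{y,w}(q) q^{ℓ(y)} ((q−1)/(q+1))^{φ(y)}`. -/
def Zsig (cs : CoxeterSystem M W) (D : AffineData cs) (LD : LVData cs D.st) (w : W) : K :=
  ∑ᶠ y : W, if BruhatLE cs y w ∧ D.st y = y⁻¹ then
    toK (LD.Psig y w) * qK ^ cs.length y * ((qK - 1) / (qK + 1)) ^ D.phi y else 0

section Exchange

/-- The generator of the sign permutation action on `W × ZMod 2`. -/
def exF (cs : CoxeterSystem M W) (i : B) : Function.End (W × ZMod 2) :=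
  fun p => (cs.simple i * p.1 * cs.simple i, p.2 + if p.1 = cs.simple i then 1 else 0)

lemma exF_pow (cs : CoxeterSystem M W) (i j : B) (n : ℕ) (x : W) (e : ZMod 2) :
    ((exF cs i * exF cs j) ^ n) (x, e) =
      ((cs.simple i * cs.simple j) ^ n * x * ((cs.simple i * cs.simple j) ^ n)⁻¹,
        e + ∑ l ∈ Finset.range (2 * n),
          if x = cs.simple j * (cs.simple i * cs.simple j) ^ l then 1 else 0) := by
  induction n with
  | zero => simp; rfl
  | succ n ih =>
    rw [pow_succ']
    change (exF cs i) ((exF cs j) (((exF cs i * exF cs j) ^ n) (x, e))) = _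
    rw [ih]
    set s := cs.simple i with hs
    set t := cs.simple j with ht
    have hss : s * s = 1 := cs.simple_mul_simple_self i
    have htt : t * t = 1 := cs.simple_mul_simple_self j
    have hsi : s⁻¹ = s := cs.inv_simple i
    have hti : t⁻¹ = t := cs.inv_simple j
    have hci : (s * t)⁻¹ = t * s := by rw [mul_inv_rev, hsi, hti]
    have key : ∀ k : ℕ, ((s * t) ^ k)⁻¹ * t = t * (s * t) ^ k := by
      intro k
      induction k with
      | zero => simp
      | succ k ihk =>
        rw [pow_succ, mul_inv_rev, hci, mul_assoc, ihk, ← pow_succ, pow_succ']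
        simp only [mul_assoc]
    have h1 : ((s * t) ^ n * x * ((s * t) ^ n)⁻¹ = t) ↔ (x = t * (s * t) ^ (2 * n)) := by
      rw [two_mul, pow_add, ← mul_assoc, ← key n]
      generalize (s * t) ^ n = c
      constructor
      · intro h; rw [← h]; group
      · intro h; rw [h]; group
    have h2 : (t * ((s * t) ^ n * x * ((s * t) ^ n)⁻¹) * t = s) ↔
        (x = t * (s * t) ^ (2 * n + 1)) := by
      have e1 : t * (s * t) ^ (2 * n + 1) = ((s * t) ^ n)⁻¹ * (t * s * t) * (s * t) ^ n := by
        rw [show 2 * n + 1 = n + (1 + n) by ring, pow_add, pow_add, ← mul_assoc, ← key n, pow_one]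
        simp only [mul_assoc]
      rw [e1]
      generalize (s * t) ^ n = c
      constructor
      · intro h
        rw [← h]
        have : t * (t * (c * x * c⁻¹) * t) * t = (t * t) * (c * x * c⁻¹) * (t * t) := by
          simp only [mul_assoc]
        rw [this, htt]; group
      · intro h
        rw [h]
        have : t * (c * (c⁻¹ * (t * s * t) * c) * c⁻¹) * t = (t * t) * s * (t * t) := by group
        rw [this, htt]; simp
    have hpi : ((s * t) ^ (n + 1))⁻¹ = ((s * t) ^ n)⁻¹ * t * s := by
      rw [pow_succ', mul_inv_rev, hci]; simp only [mul_assoc]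
    simp only [exF, ← hs, ← ht, h1, h2, Prod.mk.injEq]
    refine ⟨?_, ?_⟩
    · rw [hpi, pow_succ']; simp only [mul_assoc]
    · rw [show 2 * (n + 1) = 2 * n + 1 + 1 by ring, Finset.sum_range_succ, Finset.sum_range_succ]
      ring

lemma exF_liftable (cs : CoxeterSystem M W) : M.IsLiftable (exF cs) := by
  intro i j
  funext p
  obtain ⟨x, e⟩ := p
  rw [exF_pow, cs.simple_mul_simple_pow i j]
  have : ∑ l ∈ Finset.range (2 * M i j),
      (if x = cs.simple j * (cs.simple i * cs.simple j) ^ l then (1 : ZMod 2) else 0) = 0 := by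
    rw [two_mul, Finset.sum_range_add]
    simp only [pow_add, cs.simple_mul_simple_pow i j, one_mul]
    exact CharTwo.add_self_eq_zero _
  rw [this]
  simp only [one_mul, inv_one, mul_one, add_zero]
  rfl

/-- The sign permutation action on `W × ZMod 2`. -/
def exPhi (cs : CoxeterSystem M W) : W →* Function.End (W × ZMod 2) :=
  cs.lift ⟨exF cs, exF_liftable cs⟩

lemma exPhi_word (cs : CoxeterSystem M W) (ω : List B) (x : W) (e : ZMod 2) :
    exPhi cs (cs.wordProd ω) (x, e) =
      (cs.wordProd ω * x * (cs.wordProd ω)⁻¹, e + ((cs.rightInvSeq ω).count x : ZMod 2)) := by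
  induction ω with
  | nil => simp; rfl
  | cons i ω ih =>
    rw [cs.wordProd_cons, map_mul]
    change exPhi cs (cs.simple i) (exPhi cs (cs.wordProd ω) (x, e)) = _
    rw [ih]
    have : exPhi cs (cs.simple i) = exF cs i := cs.lift_apply_simple (exF_liftable cs) i
    rw [this]
    have h : (cs.wordProd ω * x * (cs.wordProd ω)⁻¹ = cs.simple i) ↔
        ((cs.wordProd ω)⁻¹ * cs.simple i * cs.wordProd ω = x) := by
      constructor
      · intro h; rw [← h]; group
      · intro h; rw [← h]; group
    simp only [exF, CoxeterSystem.rightInvSeq, List.count_cons, h, beq_iff_eq, Prod.mk.injEq]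
    refine ⟨by simp [mul_assoc], ?_⟩
    push_cast
    ring

/-- The exchange condition. -/
lemma exchange (cs : CoxeterSystem M W) (ω : List B) (i : B)
    (h : cs.length (cs.wordProd ω * cs.simple i) < cs.length (cs.wordProd ω)) :
    ∃ j < ω.length, cs.wordProd ω * cs.simple i = cs.wordProd (ω.eraseIdx j) := by
  suffices hm : cs.simple i ∈ cs.rightInvSeq ω by
    obtain ⟨j, hj, hji⟩ := List.mem_iff_getElem.mp hm
    refine ⟨j, by simpa using hj, ?_⟩
    rw [← cs.wordProd_mul_getD_rightInvSeq, List.getD_eq_getElem _ 1 hj, hji]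
  by_contra hm
  obtain ⟨ω', hr, hω'⟩ := cs.exists_isReduced (cs.wordProd ω * cs.simple i)
  have h0 : cs.simple i ∉ cs.rightInvSeq ω' := by
    intro hmem
    have := (cs.isRightInversion_of_mem_rightInvSeq hr hmem).2
    rw [← hω'] at this
    simp only [cs.simple_mul_simple_cancel_right] at this
    omega
  have e1 := exPhi_word cs ω (cs.simple i) 0
  rw [List.count_eq_zero_of_not_mem hm] at e1
  have e2 : exPhi cs (cs.wordProd ω) = exPhi cs (cs.wordProd ω') * exPhi cs (cs.simple i) := by
    rw [← map_mul, ← hω', cs.simple_mul_simple_cancel_right]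
  have e3 : exPhi cs (cs.simple i) (cs.simple i, 0) = (cs.simple i, 1) := by
    have : exPhi cs (cs.simple i) = exF cs i := cs.lift_apply_simple (exF_liftable cs) i
    rw [this]
    simp [exF]
  rw [e2] at e1
  change exPhi cs (cs.wordProd ω') (exPhi cs (cs.simple i) (cs.simple i, 0)) = _ at e1
  rw [e3, exPhi_word, List.count_eq_zero_of_not_mem h0] at e1
  have := congrArg Prod.snd e1
  simp at this

end Exchange

section Parabolic

/-- Every element of a standard parabolic subgroup has a reduced word in its generators. -/
lemma exists_reduced_in (cs : CoxeterSystem M W) (X : Set W) (hX : X ⊆ Set.range cs.simple)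
    (u : W) (hu : u ∈ Subgroup.closure X) :
    ∃ ω : List B, cs.IsReduced ω ∧ u = cs.wordProd ω ∧ ∀ i ∈ ω, cs.simple i ∈ X := by
  have step : ∀ (x y : W), y ∈ X →
      (∃ ω : List B, cs.IsReduced ω ∧ x = cs.wordProd ω ∧ ∀ i ∈ ω, cs.simple i ∈ X) →
      (∃ ω : List B, cs.IsReduced ω ∧ x * y = cs.wordProd ω ∧ ∀ i ∈ ω, cs.simple i ∈ X) := by
    rintro x y hy ⟨ω, hr, rfl, hω⟩
    obtain ⟨i, rfl⟩ := hX hy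
    rcases cs.length_mul_simple (cs.wordProd ω) i with h | h
    · refine ⟨ω ++ [i], ?_, by simp [cs.wordProd_append], ?_⟩
      · unfold CoxeterSystem.IsReduced at *
        rw [cs.wordProd_append]; simp [h, hr]
      · intro k hk
        rcases List.mem_append.mp hk with hk | hk
        · exact hω k hk
        · simp at hk; subst hk; exact hy
    · obtain ⟨j, hj, hje⟩ := exchange cs ω i (by omega)
      refine ⟨ω.eraseIdx j, ?_, hje, fun k hk => hω k (List.mem_of_mem_eraseIdx hk)⟩
      unfold CoxeterSystem.IsReduced at *
      rw [← hje]
      have := List.length_eraseIdx_add_one hj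
      omega
  induction hu using Subgroup.closure_induction_right with
  | one => exact ⟨[], by simp [CoxeterSystem.IsReduced], by simp, by simp⟩
  | mul_right x y hy hyX ih => exact step _ _ hyX ih
  | mul_inv_cancel x y hy hyX ih =>
    obtain ⟨i, rfl⟩ := hX hyX
    rw [cs.inv_simple]
    exact step _ _ hyX ih

lemma simple_mem_of_mem_closure (cs : CoxeterSystem M W) (X : Set W)
    (hX : X ⊆ Set.range cs.simple) (u : W) (hu : u ∈ Subgroup.closure X)
    (h1 : cs.length u ≤ 1) (hne : u ≠ 1) : u ∈ X := by
  obtain ⟨ω, hr, rfl, hω⟩ := exists_reduced_in cs X hX u hu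
  rw [hr.eq] at h1
  match ω, h1, hne, hω with
  | [], _, hne, _ => simp at hne
  | [i], _, _, hω => simpa using hω i (by simp)

lemma exch_par (cs : CoxeterSystem M W) (X : Set W) (hX : X ⊆ Set.range cs.simple)
    (u g s : W) (hu : u ∈ Subgroup.closure X) (hs : s ∈ Set.range cs.simple)
    (h : cs.length (u * g * s) < cs.length (u * g)) :
    cs.length (g * s) < cs.length g ∨
      ∃ u' ∈ Subgroup.closure X, u * g * s = u' * g ∧ cs.length u' < cs.length u := by
  obtain ⟨ω, hr, rfl, hω⟩ := exists_reduced_in cs X hX u hu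
  obtain ⟨ω', hr', rfl⟩ := cs.exists_isReduced g
  obtain ⟨i, rfl⟩ := hs
  rw [← cs.wordProd_append] at h
  obtain ⟨j, hj, hje⟩ := exchange cs _ i h
  rw [cs.wordProd_append] at hje
  by_cases hjl : j < ω.length
  · right
    rw [List.eraseIdx_append_of_lt_length hjl, cs.wordProd_append] at hje
    refine ⟨cs.wordProd (ω.eraseIdx j), ?_, hje, ?_⟩
    · have : ∀ l : List B, (∀ i ∈ l, cs.simple i ∈ X) → cs.wordProd l ∈ Subgroup.closure X := by
        intro l hl
        refine Subgroup.list_prod_mem _ ?_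
        intro x hx
        obtain ⟨k, hk, rfl⟩ := List.mem_map.mp hx
        exact Subgroup.subset_closure (hl k hk)
      exact this _ fun k hk => hω k (List.mem_of_mem_eraseIdx hk)
    · rw [hr.eq]
      have := List.length_eraseIdx_add_one hjl
      have := cs.length_wordProd_le (ω.eraseIdx j)
      omega
  · left
    rw [List.eraseIdx_append_of_length_le (by omega), cs.wordProd_append, mul_assoc,
      mul_right_inj] at hje
    rw [hje, hr'.eq]
    have hj2 : j - ω.length < ω'.length := by simp at hj; omega
    have := List.length_eraseIdx_add_one hj2
    have := cs.length_wordProd_le (ω'.eraseIdx (j - ω.length))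
    omega

lemma len_simple (cs : CoxeterSystem M W) {s : W} (hs : s ∈ Set.range cs.simple) :
    cs.length s = 1 ∧ s * s = 1 ∧ s⁻¹ = s ∧ s ≠ 1 := by
  obtain ⟨i, rfl⟩ := hs
  refine ⟨by simp, by simp, by simp, ?_⟩
  intro h
  have := cs.length_simple i
  rw [h] at this
  simp at this

lemma len_mul_simple_ne (cs : CoxeterSystem M W) {s : W} (hs : s ∈ Set.range cs.simple) (w : W) :
    cs.length (w * s) = cs.length w + 1 ∨ cs.length (w * s) + 1 = cs.length w := by
  obtain ⟨i, rfl⟩ := hs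
  exact cs.length_mul_simple w i

/-- Additivity of lengths for minimal coset representatives. -/
lemma len_add_left (cs : CoxeterSystem M W) (X : Set W) (hX : X ⊆ Set.range cs.simple)
    (x : W) (hx : ∀ u ∈ Subgroup.closure X, cs.length x ≤ cs.length (u * x))
    (u : W) (hu : u ∈ Subgroup.closure X) :
    cs.length (u * x) = cs.length u + cs.length x := by
  suffices H : ∀ (n : ℕ) (g h : W), cs.length g = n → x = g * h →
      cs.length x = cs.length g + cs.length h → cs.length (u * g) = cs.length u + cs.length g from
    H _ x 1 rfl (by simp) (by simp)
  intro n
  induction n with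
  | zero =>
    intro g h hg _ _
    rw [cs.length_eq_zero_iff] at hg
    subst hg
    simp
  | succ n ih =>
    intro g h hg hxg hl
    have hne : g ≠ 1 := by rintro rfl; simp at hg
    obtain ⟨i, hi⟩ := cs.exists_rightDescent_of_ne_one hne
    rw [cs.isRightDescent_iff] at hi
    have hg' : g = g * cs.simple i * cs.simple i := by simp
    set g' := g * cs.simple i with hgd
    have hxl : x = g' * (cs.simple i * h) := by rw [hxg, ← mul_assoc, ← hg']
    have l1 := cs.length_mul_le (cs.simple i) h
    have l2 := cs.length_mul_le g' (cs.simple i * h)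
    rw [cs.length_simple] at l1
    rw [← hxl] at l2
    have ih' := ih g' (cs.simple i * h) (by omega) hxl (by omega)
    rcases cs.length_mul_simple (u * g') i with hc | hc
    · rw [mul_assoc, ← hg'] at hc
      omega
    · exfalso
      rcases exch_par cs X hX u g' (cs.simple i) hu ⟨i, rfl⟩ (by omega) with hh | ⟨u', hu', he, -⟩
      · rw [← hg'] at hh; omega
      · rw [mul_assoc, ← hg'] at he
        have := hx (u'⁻¹ * u) (mul_mem (inv_mem hu') hu)
        have e2 : u'⁻¹ * u * x = g' * h := by
          rw [hxg, mul_assoc, ← mul_assoc u, he]; group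
        rw [e2] at this
        have := cs.length_mul_le g' h
        omega

lemma len_add_right (cs : CoxeterSystem M W) (X : Set W) (hX : X ⊆ Set.range cs.simple)
    (x : W) (hx : ∀ u ∈ Subgroup.closure X, cs.length x ≤ cs.length (x * u))
    (u : W) (hu : u ∈ Subgroup.closure X) :
    cs.length (x * u) = cs.length x + cs.length u := by
  have := len_add_left cs X hX x⁻¹ (fun v hv => by
    have := hx v⁻¹ (inv_mem hv)
    rwa [cs.length_inv, ← cs.length_inv (v * x⁻¹), mul_inv_rev, inv_inv]) u⁻¹ (inv_mem hu)
  rw [← mul_inv_rev, cs.length_inv, cs.length_inv, cs.length_inv] at this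
  omega

/-- An element with all right descents in `X` ends in any element of `W_X`. -/
lemma ends_in (cs : CoxeterSystem M W) (X : Set W) (hX : X ⊆ Set.range cs.simple)
    (z : W) (hz : ∀ s ∈ X, cs.length (z * s) < cs.length z)
    (u : W) (hu : u ∈ Subgroup.closure X) :
    cs.length z = cs.length (z * u⁻¹) + cs.length u := by
  obtain ⟨ω, hr, rfl, hω⟩ := exists_reduced_in cs X hX u hu
  clear hu
  induction ω using List.reverseRecOn with
  | nil => simp
  | append_singleton ω i ih =>
    have hr1 : cs.IsReduced ω := by simpa using hr.take ω.length
    have ih := ih hr1 (fun k hk => hω k (by simp [hk]))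
    have hl := hr.eq
    have hl1 := hr1.eq
    rw [List.length_append, List.length_singleton] at hl
    have hsX := hω i (by simp)
    rw [cs.wordProd_append, cs.wordProd_singleton] at *
    set u := cs.wordProd ω
    have hd := hz _ hsX
    have he : z = z * u⁻¹ * u := by group
    rw [he] at hd
    rcases exch_par cs (Set.range cs.simple) subset_rfl (z * u⁻¹) u (cs.simple i)
      (by rw [cs.subgroup_closure_range_simple]; trivial) ⟨i, rfl⟩ hd with hh | ⟨u', -, h1, h2⟩
    · omega
    · rw [← he] at h1
      have e : z * (u * cs.simple i)⁻¹ = u' := by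
        rw [mul_inv_rev, cs.inv_simple, ← mul_assoc, h1]; group
      rw [e]
      have e3 : z = u' * (u * cs.simple i) := by rw [← e]; group
      have := cs.length_mul_le u' (u * cs.simple i)
      rw [← e3] at this
      omega

lemma longest_unique (cs : CoxeterSystem M W) (X : Set W) (hX : X ⊆ Set.range cs.simple)
    (w : W) (hw : w ∈ Subgroup.closure X)
    (hmax : ∀ u ∈ Subgroup.closure X, cs.length u ≤ cs.length w)
    (z : W) (hzm : z ∈ Subgroup.closure X) (hz : ∀ s ∈ X, cs.length (z * s) < cs.length z) :
    z = w := by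
  have h1 := ends_in cs X hX z hz w hw
  have h2 := hmax z hzm
  have h3 : cs.length (z * w⁻¹) = 0 := by omega
  rw [cs.length_eq_zero_iff] at h3
  exact mul_inv_eq_one.mp h3

lemma longest_desc (cs : CoxeterSystem M W) (X : Set W) (hX : X ⊆ Set.range cs.simple)
    (w : W) (hw : w ∈ Subgroup.closure X)
    (hmax : ∀ u ∈ Subgroup.closure X, cs.length u ≤ cs.length w) (s : W) (hs : s ∈ X) :
    cs.length (w * s) < cs.length w := by
  have := hmax _ (mul_mem hw (Subgroup.subset_closure hs))
  have := len_mul_simple_ne cs (hX hs) w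
  omega

lemma longest_inv (cs : CoxeterSystem M W) (X : Set W) (hX : X ⊆ Set.range cs.simple)
    (w : W) (hw : w ∈ Subgroup.closure X)
    (hmax : ∀ u ∈ Subgroup.closure X, cs.length u ≤ cs.length w) : w⁻¹ = w :=
  longest_unique cs X hX w hw hmax _ (inv_mem hw)
    (longest_desc cs X hX _ (inv_mem hw) (by simpa using hmax))

/-- Representatives of double cosets. -/
lemma dcoset_rep (cs : CoxeterSystem M W) (X : Set W) (hX : X ⊆ Set.range cs.simple)
    (b g : W)
    (hb : ∀ u ∈ Subgroup.closure X, ∀ v ∈ Subgroup.closure X,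
      cs.length b ≤ cs.length (u * b * v))
    (hg : ∀ u ∈ Subgroup.closure X, cs.length g ≤ cs.length (u * g)) :
    ∀ (n : ℕ) (x v : W), cs.length x = n → x ∈ Subgroup.closure X → v ∈ Subgroup.closure X →
      g = x * b * v → ∃ v' ∈ Subgroup.closure X, g = b * v' := by
  intro n
  induction n with
  | zero =>
    intro x v hx _ hv he
    rw [cs.length_eq_zero_iff] at hx
    exact ⟨v, hv, by simpa [hx] using he⟩
  | succ n ih =>
    intro x v hx hxm hv he
    have hne : x ≠ 1 := by rintro rfl; simp at hx
    obtain ⟨i, hi⟩ := cs.exists_rightDescent_of_ne_one hne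
    rw [cs.isRightDescent_iff] at hi
    have hsX : cs.simple i ∈ X := by
      obtain h | ⟨u', hu', h1, -⟩ := exch_par cs X hX x 1 (cs.simple i) hxm ⟨i, rfl⟩
        (by simp only [mul_one]; omega)
      · simp at h
      · refine simple_mem_of_mem_closure cs X hX _ ?_ (by simp) (len_simple cs ⟨i, rfl⟩).2.2.2
        have : cs.simple i = x⁻¹ * u' := by
          rw [mul_one, mul_one] at h1; rw [← h1]; group
        rw [this]
        exact mul_mem (inv_mem hxm) hu'
    have hsm : cs.simple i ∈ Subgroup.closure X := Subgroup.subset_closure hsX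
    have a1 := len_add_left cs X hX g hg x⁻¹ (inv_mem hxm)
    have a2 := len_add_left cs X hX g hg (x * cs.simple i)⁻¹ (inv_mem (mul_mem hxm hsm))
    have e1 : x⁻¹ * g = b * v := by rw [he]; group
    have e2 : (x * cs.simple i)⁻¹ * g = cs.simple i * b * v := by
      rw [he, mul_inv_rev, cs.inv_simple]; group
    rw [e1, cs.length_inv] at a1
    rw [e2, cs.length_inv] at a2
    have hlt : cs.length (v⁻¹ * b⁻¹ * cs.simple i) < cs.length (v⁻¹ * b⁻¹) := by
      have t1 : v⁻¹ * b⁻¹ * cs.simple i = (cs.simple i * b * v)⁻¹ := by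
        simp [mul_inv_rev, mul_assoc]
      have t2 : v⁻¹ * b⁻¹ = (b * v)⁻¹ := by simp [mul_inv_rev]
      rw [t1, t2, cs.length_inv, cs.length_inv]
      omega
    rcases exch_par cs X hX v⁻¹ b⁻¹ (cs.simple i) (inv_mem hv) ⟨i, rfl⟩ hlt with
      hh | ⟨u', hu', h1, -⟩
    · exfalso
      have := hb _ hsm 1 (one_mem _)
      rw [mul_one, ← cs.length_inv b, ← cs.length_inv (cs.simple i * b), mul_inv_rev,
        cs.inv_simple] at this
      omega
    · refine ih (x * cs.simple i) u'⁻¹ (by omega) (mul_mem hxm hsm) (inv_mem hu') ?_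
      have h2 := congrArg (·⁻¹) h1
      simp only [mul_inv_rev, inv_inv, cs.inv_simple] at h2
      rw [he, mul_assoc, mul_assoc, mul_assoc, ← h2]
      simp [mul_assoc]

end Parabolic

section Star

variable {cs : CoxeterSystem M W} (D : AffineData cs)

lemma Jset_sub : D.Jset ⊆ Set.range cs.simple := fun _ h => h.1

lemma st_len_le (w : W) : cs.length (D.st w) ≤ cs.length w := by
  obtain ⟨ω, hr, rfl⟩ := cs.exists_isReduced w
  rw [hr.eq]
  clear hr
  induction ω with
  | nil => simp
  | cons i ω ih =>
    rw [cs.wordProd_cons, map_mul]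
    have h1 := cs.length_mul_le (D.st (cs.simple i)) (D.st (cs.wordProd ω))
    have h2 := (len_simple cs (D.hst_S _ ⟨i, rfl⟩)).1
    simp only [List.length_cons]
    omega

lemma st_len (w : W) : cs.length (D.st w) = cs.length w := by
  have h1 := st_len_le D w
  have h2 := st_len_le D (D.st w)
  rw [D.hst_inv] at h2
  omega

lemma wJ_inv : D.wJ⁻¹ = D.wJ :=
  longest_inv cs D.Jset (Jset_sub D) D.wJ D.hwJ_mem D.hwJ_max

lemma wJ_sq : D.wJ * D.wJ = 1 := by
  nth_rw 1 [← wJ_inv D]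
  simp

lemma st_J (s : W) (hs : s ∈ D.Jset) : D.st s ∈ D.Jset := by
  have hsm : s ∈ Subgroup.closure D.Jset := Subgroup.subset_closure hs
  have h := len_simple cs (Jset_sub D hs)
  refine simple_mem_of_mem_closure cs D.Jset (Jset_sub D) _ ?_ ?_ ?_
  · rw [D.hst_J s hsm]
    exact mul_mem (mul_mem D.hwJ_mem hsm) D.hwJ_mem
  · rw [st_len, h.1]
  · intro h1
    apply h.2.2.2
    rw [← D.hst_inv s, h1, map_one]

lemma st_WJ (u : W) (hu : u ∈ Subgroup.closure D.Jset) : D.st u ∈ Subgroup.closure D.Jset := by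
  rw [D.hst_J u hu]
  exact mul_mem (mul_mem D.hwJ_mem hu) D.hwJ_mem

end Star

/-- For every `y ∈ W_{H*}`, one has `b⁻¹ y* b = w_{H*} y w_{H*}`.  In
particular the map `ε : y ↦ b⁻¹ y* b` maps `W_{H*}` to itself and coincides with conjugation
by the longest element `w_{H*}`. -/
theorem eps_eq_conj_wHstar (cs : CoxeterSystem M W) (D : AffineData cs)
    (mu b wHs : W) (hmu : D.IsDominant mu)
    (hb_mem : b ∈ D.DCoset mu)
    (hb_min : ∀ y ∈ D.DCoset mu, cs.length b ≤ cs.length y)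
    (hwHs_mem : wHs ∈ D.WHstar b)
    (hwHs_max : ∀ u ∈ D.WHstar b, cs.length u ≤ cs.length wHs) :
    ∀ y ∈ D.WHstar b, b⁻¹ * D.st y * b = wHs * y * wHs := by
  have hJ := Jset_sub D
  have hJ2 := wJ_sq D
  have hJi := wJ_inv D
  have hwJ : D.wJ ∈ Subgroup.closure D.Jset := D.hwJ_mem
  have hwJmax : ∀ u ∈ Subgroup.closure D.Jset, cs.length u ≤ cs.length D.wJ := D.hwJ_max
  obtain ⟨hmuL, hmul⟩ := hmu
  obtain ⟨u0, hu0, v0, hv0, hb0⟩ := hb_mem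
  change u0 ∈ Subgroup.closure D.Jset at hu0
  change v0 ∈ Subgroup.closure D.Jset at hv0
  have hmub : mu = u0⁻¹ * b * v0⁻¹ := by rw [hb0]; group
  -- `b` is of minimal length
  have hb : ∀ u ∈ Subgroup.closure D.Jset, ∀ v ∈ Subgroup.closure D.Jset,
      cs.length b ≤ cs.length (u * b * v) := by
    intro u hu v hv
    refine hb_min _ ⟨u * u0, mul_mem hu hu0, v0 * v, mul_mem hv0 hv, ?_⟩
    rw [hb0]; group
  have hbr : ∀ v ∈ Subgroup.closure D.Jset,
      cs.length (b * v) = cs.length b + cs.length v :=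
    len_add_right cs D.Jset hJ b (fun v hv => by simpa using hb 1 (one_mem _) v hv)
  -- the maximal element `d`
  obtain ⟨d, hd⟩ : ∃ d, d = mu * D.wJ := ⟨_, rfl⟩
  have hdr : ∀ s ∈ D.Jset, cs.length (d * s) < cs.length d := by
    intro s hs
    have h1 := longest_desc cs D.Jset hJ D.wJ hwJ hwJmax s hs
    have h2 := cs.length_mul_le mu (D.wJ * s)
    rw [hd, hmul, mul_assoc]
    omega
  have hstd : D.st d = d⁻¹ := by
    rw [hd, map_mul, D.hst_Lam mu hmuL, D.hst_J D.wJ hwJ, hJ2, mul_inv_rev, mul_inv_rev,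
      mul_inv_rev]
    simp only [hJi, inv_inv, one_mul, mul_assoc, hJ2, mul_one]
  have hdl : ∀ s ∈ D.Jset, cs.length (d⁻¹ * s) < cs.length d⁻¹ := by
    intro s hs
    have h1 := hdr _ (st_J D s hs)
    have h2 : D.st (d * D.st s) = d⁻¹ * s := by rw [map_mul, D.hst_inv, hstd]
    rw [← h2, st_len, cs.length_inv]
    exact h1
  have hg0 := ends_in cs D.Jset hJ d⁻¹ hdl D.wJ hwJ
  obtain ⟨g, hg⟩ : ∃ g, g = D.wJ * d := ⟨_, rfl⟩
  have hdg : d = D.wJ * g := by rw [hg, ← mul_assoc, hJ2, one_mul]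
  have hdlen : cs.length d = cs.length D.wJ + cs.length g := by
    rw [← mul_inv_rev, cs.length_inv, cs.length_inv, ← hg] at hg0
    omega
  have hgmin : ∀ u ∈ Subgroup.closure D.Jset, cs.length g ≤ cs.length (u * g) := by
    intro u hu
    have h1 := hwJmax _ (mul_mem hwJ (inv_mem hu))
    have h2 := cs.length_mul_le (D.wJ * u⁻¹) (u * g)
    have h3 : D.wJ * u⁻¹ * (u * g) = d := by rw [hdg]; group
    rw [h3] at h2
    omega
  obtain ⟨v, hv, hgv⟩ := dcoset_rep cs D.Jset hJ b g hb hgmin _ (D.wJ * u0⁻¹) (v0⁻¹ * D.wJ) rfl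
    (mul_mem hwJ (inv_mem hu0)) (mul_mem (inv_mem hv0) hwJ) (by
      rw [hg, hd, hmub]; group)
  -- `b* = b⁻¹`
  have hstb : D.st b = b⁻¹ := by
    have hblen : cs.length (D.st b⁻¹) = cs.length b := by rw [st_len, cs.length_inv]
    have hmst : D.st mu⁻¹ = D.wJ * mu * D.wJ := by
      rw [map_inv, D.hst_Lam mu hmuL, inv_inv, hJi]
    have e : D.st b⁻¹ = (D.st v0⁻¹ * D.wJ * u0⁻¹) * b * (v0⁻¹ * D.wJ * D.st u0⁻¹) := by
      nth_rw 1 [hb0]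
      rw [mul_inv_rev, mul_inv_rev, map_mul, map_mul, hmst, hmub]
      group
    have m1 : D.st v0⁻¹ * D.wJ * u0⁻¹ ∈ Subgroup.closure D.Jset :=
      mul_mem (mul_mem (st_WJ D _ (inv_mem hv0)) hwJ) (inv_mem hu0)
    have m2 : v0⁻¹ * D.wJ * D.st u0⁻¹ ∈ Subgroup.closure D.Jset :=
      mul_mem (mul_mem (inv_mem hv0) hwJ) (st_WJ D _ (inv_mem hu0))
    obtain ⟨v', hv', h'⟩ := dcoset_rep cs D.Jset hJ b (D.st b⁻¹) hb (by
      intro u hu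
      have h3 := hb _ (mul_mem hu m1) _ m2
      rw [hblen, e]
      simpa only [mul_assoc] using h3) _ _ _ rfl m1 m2 e
    have := hbr v' hv'
    rw [← h', hblen] at this
    have hv1 : cs.length v' = 0 := by omega
    rw [cs.length_eq_zero_iff] at hv1
    rw [hv1, mul_one, map_inv] at h'
    rw [← inv_inj, h', inv_inv]
  -- `H*`
  have hHs : ∀ r, r ∈ D.Hstar b ↔ r ∈ D.Jset ∧ b * r * b⁻¹ ∈ D.Jset := by
    intro r
    constructor
    · rintro ⟨h, ⟨hhJ, j, hj, hjh⟩, rfl⟩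
      refine ⟨st_J D h hhJ, ?_⟩
      have : b * D.st h * b⁻¹ = D.st j := by
        rw [← hjh]
        simp only [map_mul, map_inv, hstb]
        group
      rw [this]
      exact st_J D j hj
    · rintro ⟨h1, h2⟩
      refine ⟨D.st r, ⟨st_J D r h1, D.st (b * r * b⁻¹), st_J D _ h2, ?_⟩, D.hst_inv r⟩
      simp only [map_mul, map_inv, hstb]
      group
  have hHJ : D.Hstar b ⊆ D.Jset := fun r hr => ((hHs r).mp hr).1
  have hH : D.Hstar b ⊆ Set.range cs.simple := fun r hr => hJ (hHJ hr)
  have hle : ∀ u ∈ Subgroup.closure (D.Hstar b), u ∈ Subgroup.closure D.Jset :=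
    fun u hu => Subgroup.closure_mono hHJ hu
  have hconj : ∀ u ∈ Subgroup.closure (D.Hstar b), b * u * b⁻¹ ∈ Subgroup.closure D.Jset := by
    intro u hu
    have h1 : Subgroup.closure (D.Hstar b) ≤
        (Subgroup.closure D.Jset).comap (MulAut.conj b).toMonoidHom := by
      rw [Subgroup.closure_le]
      intro r hr
      exact Subgroup.subset_closure ((hHs r).mp hr).2
    exact h1 hu
  change wHs ∈ Subgroup.closure (D.Hstar b) at hwHs_mem
  change ∀ u ∈ Subgroup.closure (D.Hstar b), cs.length u ≤ cs.length wHs at hwHs_max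
  have hwi : wHs⁻¹ = wHs := longest_inv cs _ hH wHs hwHs_mem hwHs_max
  have hwv : cs.length (wHs * v) = cs.length wHs + cs.length v := by
    refine len_add_left cs _ hH v ?_ wHs hwHs_mem
    intro u hu
    have h1 := hgmin _ (hconj u hu)
    have h2 : b * u * b⁻¹ * g = b * (u * v) := by rw [hgv]; group
    rw [h2, hbr _ (mul_mem (hle u hu) hv), hgv, hbr v hv] at h1
    omega
  have hfin : wHs * v = D.wJ := by
    refine longest_unique cs D.Jset hJ D.wJ hwJ hwJmax _ (mul_mem (hle _ hwHs_mem) hv) ?_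
    intro s hs
    have hsm : s ∈ Subgroup.closure D.Jset := Subgroup.subset_closure hs
    have hs1 := len_simple cs (hJ hs)
    by_cases hvs : cs.length (v * s) < cs.length v
    · have := cs.length_mul_le wHs (v * s)
      rw [hwv, mul_assoc]
      omega
    · have h1 := hdr s hs
      rw [hdg] at h1
      rcases exch_par cs D.Jset hJ D.wJ g s hwJ (hJ hs) h1 with h2 | ⟨u', hu', h2, -⟩
      · exfalso
        rw [hgv, mul_assoc, hbr _ (mul_mem hv hsm), hbr _ hv] at h2
        omega
      · obtain ⟨x, hx⟩ : ∃ x, x = D.wJ⁻¹ * u' := ⟨_, rfl⟩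
        have hxm : x ∈ Subgroup.closure D.Jset := hx ▸ mul_mem (inv_mem hwJ) hu'
        have hxg : x * g = g * s := by
          rw [hx, mul_assoc, ← h2]; group
        have hx1 : x = g * s * g⁻¹ := by rw [← hxg]; group
        have hxne : x ≠ 1 := by
          intro hx2
          rw [hx2, one_mul] at hxg
          exact hs1.2.2.2 (mul_left_cancel (a := g) (by rw [← hxg, mul_one]))
        have l1 := len_add_left cs D.Jset hJ g hgmin x hxm
        have l2 := cs.length_mul_le g s
        rw [hxg] at l1
        have hxJ : x ∈ D.Jset :=
          simple_mem_of_mem_closure cs D.Jset hJ x hxm (by omega) hxne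
        obtain ⟨r, hr⟩ : ∃ r, r = v * s * v⁻¹ := ⟨_, rfl⟩
        have hrm : r ∈ Subgroup.closure D.Jset := hr ▸ mul_mem (mul_mem hv hsm) (inv_mem hv)
        have hbrx : b * r = x * b := by rw [hx1, hr, hgv]; group
        have hrx : b * r * b⁻¹ = x := by rw [hbrx]; group
        have hrne : r ≠ 1 := by
          intro hr2
          rw [hr2] at hrx
          apply hxne
          rw [← hrx]; group
        have l3 := hbr r hrm
        have l4 := cs.length_mul_le x b
        rw [hbrx] at l3
        have l5 := (len_simple cs (hJ hxJ)).1
        have hrJ : r ∈ D.Jset :=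
          simple_mem_of_mem_closure cs D.Jset hJ r hrm (by omega) hrne
        have hrH : r ∈ D.Hstar b := (hHs r).mpr ⟨hrJ, hrx ▸ hxJ⟩
        have l6 := longest_desc cs _ hH wHs hwHs_mem hwHs_max r hrH
        have l7 := cs.length_mul_le (wHs * r) v
        have e : wHs * v * s = wHs * r * v := by rw [hr]; group
        rw [e, hwv]
        omega
  -- conclusion
  have hbmu : b = D.wJ * mu * wHs := by
    have h1 : v = wHs⁻¹ * D.wJ := by rw [← hfin]; group
    have h2 : D.wJ * (mu * D.wJ) = b * (wHs⁻¹ * D.wJ) := by rw [← hd, ← hg, hgv, h1]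
    have h3 : D.wJ * mu = b * wHs⁻¹ := by
      apply mul_right_cancel (b := D.wJ)
      rw [mul_assoc, h2]; group
    rw [h3]; group
  intro y hy
  change y ∈ Subgroup.closure (D.Hstar b) at hy
  have hyJ := hle y hy
  have hmem : b⁻¹ * D.st y * b ∈ Subgroup.closure D.Jset := by
    have h1 := st_WJ D _ (hconj y hy)
    simp only [map_mul, map_inv, hstb, inv_inv] at h1
    exact h1
  have hform : b⁻¹ * D.st y * b = wHs⁻¹ * (mu⁻¹ * y * mu) * wHs := by
    rw [D.hst_J y hyJ]
    have e1 : b⁻¹ * (D.wJ * y * D.wJ) * b =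
        wHs⁻¹ * (mu⁻¹ * ((D.wJ⁻¹ * D.wJ) * y * (D.wJ * D.wJ)) * mu) * wHs := by
      rw [hbmu]; group
    rw [e1, hJ2]
    group
  have hcomm : mu⁻¹ * y * mu = y := by
    have hm : mu⁻¹ * y * mu ∈ Subgroup.closure D.Jset := by
      have e : mu⁻¹ * y * mu = wHs * (b⁻¹ * D.st y * b) * wHs⁻¹ := by rw [hform]; group
      rw [e]
      exact mul_mem (mul_mem (hle _ hwHs_mem) hmem) (inv_mem (hle _ hwHs_mem))
    refine (D.hs0_hyper y).unique ⟨hm, ?_⟩ ⟨hyJ, by simp⟩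
    have e : y * (mu⁻¹ * y * mu)⁻¹ = (y * mu⁻¹ * y⁻¹) * mu := by group
    rw [e]
    exact mul_mem (D.hLam_normal.conj_mem _ (inv_mem hmuL) y) hmuL
  rw [hform, hcomm, hwi]

end LY
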